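/- arXiv:2101.08654 — 3 statements merged into one kernel-verified Lean document; each statement's English description precedes it below -/
import Mathlib

section
/- Assume Λ is not contained in any real line, and let U ⊆ D be open with −1 in the closure of U. Then for generic λ ∈ Ω (i.e., for all λ in a residual subset of Ω), the image f_λ(U) is a dense open subset of ℂ. -/
open Filter Topology

lemma aux_greedy (Λ : Set ℂ) (M : ℝ) (hM : ∀ x ∈ Λ, ‖x‖ ≤ M) (z : ℂ) (hz : ‖z‖ < 1)
    (hz0 : z ≠ 0) (R : ℝ)
    (H : ∀ w : ℂ, ‖w‖ ≤ R → ∃ a b : Λ, ‖w - ((a : ℂ) + b * z)‖ ≤ R * ‖z‖ ^ 2)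
    (w : ℂ) (hw : ‖w‖ ≤ R) :
    ∃ μ : ℕ → Λ, ∑' n : ℕ, (μ n : ℂ) * z ^ n = w := by
  obtain ⟨a0, b0, -⟩ := H w hw
  have H' : ∀ w : ℂ, ∃ a b : Λ, ‖w‖ ≤ R → ‖w - ((a : ℂ) + b * z)‖ ≤ R * ‖z‖ ^ 2 := by
    intro w
    by_cases h : ‖w‖ ≤ R
    · obtain ⟨a, b, h'⟩ := H w h
      exact ⟨a, b, fun _ => h'⟩
    · exact ⟨a0, b0, fun h' => absurd h' h⟩
  choose A B hAB using H'
  let s : ℕ → ℂ := fun n => Nat.rec w (fun _ v => (v - ((A v : ℂ) + B v * z)) / z ^ 2) n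
  have hs0 : s 0 = w := rfl
  have hs1 : ∀ k, s (k + 1) = (s k - ((A (s k) : ℂ) + B (s k) * z)) / z ^ 2 := fun k => rfl
  have hzn : 0 < ‖z‖ := norm_pos_iff.mpr hz0
  have hsR : ∀ k, ‖s k‖ ≤ R := by
    intro k
    induction k with
    | zero => exact hw
    | succ k ih =>
      rw [hs1, norm_div, norm_pow, div_le_iff₀ (by positivity)]
      exact hAB _ ih
  let μ : ℕ → Λ := fun n => if n % 2 = 0 then A (s (n / 2)) else B (s (n / 2))
  have hμ0 : ∀ k, μ (2 * k) = A (s k) := by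
    intro k
    have h1 : (2 * k) % 2 = 0 := by omega
    have h2 : (2 * k) / 2 = k := by omega
    simp only [μ, h1, h2, if_true]
  have hμ1 : ∀ k, μ (2 * k + 1) = B (s k) := by
    intro k
    have h1 : ¬ ((2 * k + 1) % 2 = 0) := by omega
    have h2 : (2 * k + 1) / 2 = k := by omega
    simp only [μ, h1, h2, if_false]
  refine ⟨μ, ?_⟩
  have hpart : ∀ k, ∑ n ∈ Finset.range (2 * k), (μ n : ℂ) * z ^ n = w - z ^ (2 * k) * s k := by
    intro k
    induction k with
    | zero => simp [hs0]
    | succ k ih =>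
      rw [show 2 * (k + 1) = 2 * k + 1 + 1 by ring, Finset.sum_range_succ,
        Finset.sum_range_succ, ih, hμ0, hμ1, hs1]
      field_simp
      ring
  have hsum : Summable fun n => (μ n : ℂ) * z ^ n := by
    refine Summable.of_norm_bounded (g := fun n => M * ‖z‖ ^ n)
      ((summable_geometric_of_lt_one (norm_nonneg _) hz).mul_left M) ?_
    intro n
    rw [norm_mul, norm_pow]
    gcongr
    exact hM _ (μ n).2
  have h2 : Tendsto (fun k : ℕ => 2 * k) atTop atTop :=
    tendsto_id.const_mul_atTop' (by norm_num)
  have t1 := hsum.hasSum.tendsto_sum_nat.comp h2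
  have t2 : Tendsto (fun k => w - z ^ (2 * k) * s k) atTop (𝓝 w) := by
    have : Tendsto (fun k => z ^ (2 * k) * s k) atTop (𝓝 0) := by
      have t3 : Tendsto (fun k : ℕ => ‖z‖ ^ (2 * k) * R) atTop (𝓝 (0 * R)) :=
        ((tendsto_pow_atTop_nhds_zero_of_lt_one (norm_nonneg _) hz).comp h2).mul_const R
      rw [zero_mul] at t3
      refine squeeze_zero_norm (fun k => ?_) t3
      rw [norm_mul, norm_pow]
      gcongr
      exact hsR k
    simpa using tendsto_const_nhds.sub this
  refine tendsto_nhds_unique t1 ?_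
  refine t2.congr fun k => ?_
  simp [hpart]

lemma aux_delta (Λ : Set ℂ) (hΛ2 : Λ.Nontrivial)
    (hline : ¬ ∃ p v : ℂ, v ≠ 0 ∧ ∀ x ∈ Λ, ∃ t : ℝ, x = p + (t : ℂ) * v) :
    ∃ δ : ℝ, 0 < δ ∧ ∀ w : ℂ, ∃ a b : Λ,
      δ * ‖w‖ ≤ (((a : ℂ) - b) * (starRingEnd ℂ) w).re := by
  obtain ⟨a, ha, b, hb, hab⟩ := hΛ2
  push Not at hline
  obtain ⟨c, hc, hcl⟩ := hline a (b - a) (sub_ne_zero.mpr hab.symm)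
  let h : ℂ → ℝ := fun u => max |((b - a) * (starRingEnd ℂ) u).re| |((c - a) * (starRingEnd ℂ) u).re|
  have hcont : Continuous h := by
    have := Complex.continuous_conj
    fun_prop
  obtain ⟨u0, hu0, hmin⟩ := (isCompact_sphere (0 : ℂ) 1).exists_isMinOn
    ⟨1, by simp⟩ hcont.continuousOn
  have hu0n : u0 ≠ 0 := by
    rintro rfl
    simp at hu0
  have hpos : 0 < h u0 := by
    by_contra hn
    have h1 : |((b - a) * (starRingEnd ℂ) u0).re| ≤ 0 := (le_max_left _ _).trans (not_lt.mp hn)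
    have h2 : |((c - a) * (starRingEnd ℂ) u0).re| ≤ 0 := (le_max_right _ _).trans (not_lt.mp hn)
    have h1 := abs_nonpos_iff.mp h1
    have h2 := abs_nonpos_iff.mp h2
    have hu : (starRingEnd ℂ) u0 ≠ 0 := by simpa using hu0n
    set v := (starRingEnd ℂ) u0
    have e1 : (b - a) * v = (((b - a) * v).im : ℂ) * Complex.I := by
      apply Complex.ext <;> simp [h1] at *
    have e2 : (c - a) * v = (((c - a) * v).im : ℂ) * Complex.I := by
      apply Complex.ext <;> simp [h2] at *
    set p := ((b - a) * v).im
    set q := ((c - a) * v).im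
    have hp : (p : ℂ) ≠ 0 := by
      intro hp
      rw [hp, zero_mul] at e1
      rcases mul_eq_zero.mp e1 with h | h
      · exact hab (sub_eq_zero.mp h).symm
      · exact hu h
    apply hcl (q / p)
    have : (c - a) * v * p = (q / p : ℂ) * (b - a) * v * p := by
      rw [e2]
      have : (q / p : ℂ) * (b - a) * v * p = (q / p : ℂ) * p * ((b - a) * v) := by ring
      rw [this, e1, div_mul_cancel₀ _ hp]
      ring
    have := mul_right_cancel₀ hu (mul_right_cancel₀ hp this)
    push_cast
    linear_combination this
  refine ⟨h u0, hpos, fun w => ?_⟩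
  have hw : h u0 * ‖w‖ ≤ h w := by
    rcases eq_or_ne w 0 with rfl | hw
    · simp [h]
    have hwn : 0 < ‖w‖ := norm_pos_iff.mpr hw
    have hs : ((‖w‖⁻¹ : ℝ) : ℂ) * w ∈ Metric.sphere (0 : ℂ) 1 := by
      simp [hw]
    have := hmin hs
    simp only [Set.mem_ofPred_eq] at this
    have e : ∀ x : ℂ, |(x * (starRingEnd ℂ) (((‖w‖⁻¹ : ℝ) : ℂ) * w)).re|
        = ‖w‖⁻¹ * |(x * (starRingEnd ℂ) w).re| := by
      intro x
      rw [map_mul, Complex.conj_ofReal, mul_left_comm, Complex.re_ofReal_mul, abs_mul,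
        abs_of_pos (inv_pos.mpr hwn)]
    have e2 : h (((‖w‖⁻¹ : ℝ) : ℂ) * w) = ‖w‖⁻¹ * h w := by
      simp only [h, e]
      rw [mul_max_of_nonneg _ _ (by positivity)]
    rw [e2, inv_mul_eq_div, le_div_iff₀ hwn] at this
    exact this
  have hneg : ∀ x y : ℂ, ((x - y) * (starRingEnd ℂ) w).re = -((y - x) * (starRingEnd ℂ) w).re := by
    intro x y
    rw [← Complex.neg_re]
    congr 1
    ring
  rcases le_max_iff.mp hw with h1 | h1 <;> rcases le_abs.mp h1 with h2 | h2
  · exact ⟨⟨b, hb⟩, ⟨a, ha⟩, h2⟩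
  · exact ⟨⟨a, ha⟩, ⟨b, hb⟩, by rw [hneg]; exact h2⟩
  · exact ⟨⟨c, hc⟩, ⟨a, ha⟩, h2⟩
  · exact ⟨⟨a, ha⟩, ⟨c, hc⟩, by rw [hneg]; exact h2⟩

lemma aux_step (Λ : Set ℂ) (M : ℝ) (hM : ∀ x ∈ Λ, ‖x‖ ≤ M) (hM0 : 0 ≤ M) (δ : ℝ) (hδ : 0 < δ)
    (hd : ∀ w : ℂ, ∃ a b : Λ, δ * ‖w‖ ≤ (((a : ℂ) - b) * (starRingEnd ℂ) w).re)
    (R : ℝ) (hR : 4 * M ^ 2 + 1 ≤ δ * R / 2) (hR8 : 8 * M ≤ R) (z : ℂ) (hz : ‖z‖ < 1)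
    (h1 : M * ‖z + 1‖ ≤ δ / 2) (h2 : R ^ 2 * (1 - ‖z‖ ^ 4) ≤ 1) (h3 : 3 / 4 ≤ ‖z‖ ^ 2)
    (w : ℂ) (hw : ‖w‖ ≤ R) :
    ∃ a b : Λ, ‖w - ((a : ℂ) + b * z)‖ ≤ R * ‖z‖ ^ 2 := by
  obtain ⟨a, b, hab⟩ := hd w
  refine ⟨a, b, ?_⟩
  have hdn : ‖(a : ℂ) + b * z‖ ≤ 2 * M := by
    have := norm_add_le (a : ℂ) (b * z)
    rw [norm_mul] at this
    have ha := hM _ a.2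
    have hb := hM _ b.2
    have : ‖(b : ℂ)‖ * ‖z‖ ≤ M * 1 := by gcongr
    linarith
  have hR0 : 0 ≤ R := by linarith
  rcases le_total ‖w‖ (R / 2) with hw2 | hw2
  · have := norm_sub_le w ((a : ℂ) + b * z)
    nlinarith
  · set d := (a : ℂ) + b * z with hdd
    have hre : δ / 2 * ‖w‖ ≤ (d * (starRingEnd ℂ) w).re := by
      have e : d * (starRingEnd ℂ) w = ((a : ℂ) - b) * (starRingEnd ℂ) w
          + b * (z + 1) * (starRingEnd ℂ) w := by rw [hdd]; ring
      have h4 : |(b * (z + 1) * (starRingEnd ℂ) w).re| ≤ δ / 2 * ‖w‖ := by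
        refine (Complex.abs_re_le_norm _).trans ?_
        rw [norm_mul, norm_mul, Complex.norm_conj]
        have hb := hM _ b.2
        have : ‖(b : ℂ)‖ * ‖z + 1‖ ≤ M * ‖z + 1‖ := by gcongr
        gcongr
        linarith
      rw [e, Complex.add_re]
      have := (abs_le.mp h4).1
      linarith
    have hsq : ‖w - d‖ ^ 2 = ‖w‖ ^ 2 + ‖d‖ ^ 2 - 2 * (d * (starRingEnd ℂ) w).re := by
      simp only [Complex.sq_norm, Complex.normSq_apply, Complex.sub_re, Complex.sub_im,
        Complex.mul_re, Complex.conj_re, Complex.conj_im]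
      ring
    have hd2 : ‖d‖ ^ 2 ≤ (2 * M) ^ 2 := by gcongr
    have hw3 : ‖w‖ ^ 2 ≤ R ^ 2 := by gcongr
    have hw4 : δ * (R / 2) ≤ δ * ‖w‖ := by gcongr
    refine le_of_sq_le_sq ?_ (by positivity)
    nlinarith

lemma aux_dense (Λ : Set ℂ) (M : ℝ) (hM : ∀ x ∈ Λ, ‖x‖ ≤ M) (hM0 : 0 ≤ M) (δ : ℝ) (hδ : 0 < δ)
    (hd : ∀ w : ℂ, ∃ a b : Λ, δ * ‖w‖ ≤ (((a : ℂ) - b) * (starRingEnd ℂ) w).re)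
    (U : Set ℂ) (hUD : U ⊆ Metric.ball (0 : ℂ) 1)
    (hcl : (-1 : ℂ) ∈ closure U) (w : ℂ) (l0 : ℕ → Λ) (N : ℕ) :
    ∃ l : ℕ → Λ, (∀ n < N, l n = l0 n) ∧ ∃ z ∈ U, ∑' n : ℕ, (l n : ℂ) * z ^ n = w := by
  let P : ℂ → ℂ := fun z => ∑ n ∈ Finset.range N, (l0 n : ℂ) * z ^ n
  let Q : ℂ → ℝ := fun z => ‖w - P z‖ / ‖z‖ ^ N
  have hP : Continuous P := by fun_prop
  have hQ : ContinuousAt Q (-1) := by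
    refine ContinuousAt.div (by fun_prop) (by fun_prop) (by simp)
  obtain ⟨R, hRQ, hR, hR8⟩ : ∃ R : ℝ, Q (-1) < R ∧ 4 * M ^ 2 + 1 ≤ δ * R / 2 ∧ 8 * M ≤ R := by
    have t : Tendsto (fun R : ℝ => δ * R / 2) atTop atTop :=
      (tendsto_id.const_mul_atTop hδ).atTop_div_const (by norm_num)
    exact ((eventually_gt_atTop (Q (-1))).and
      ((t.eventually_ge_atTop _).and (eventually_ge_atTop _))).exists
  have ev1 : ∀ᶠ z in 𝓝 (-1 : ℂ), Q z < R := hQ.eventually_lt_const hRQ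
  have ev2 : ∀ᶠ z in 𝓝 (-1 : ℂ), M * ‖z + 1‖ < δ / 2 :=
    (show ContinuousAt (fun z : ℂ => M * ‖z + 1‖) (-1) by fun_prop).eventually_lt_const
      (by simpa using hδ)
  have ev3 : ∀ᶠ z in 𝓝 (-1 : ℂ), R ^ 2 * (1 - ‖z‖ ^ 4) < 1 :=
    (show ContinuousAt (fun z : ℂ => R ^ 2 * (1 - ‖z‖ ^ 4)) (-1) by fun_prop).eventually_lt_const
      (by simp)
  have ev4 : ∀ᶠ z in 𝓝 (-1 : ℂ), 3 / 4 < ‖z‖ ^ 2 :=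
    (show ContinuousAt (fun z : ℂ => ‖z‖ ^ 2) (-1) by fun_prop).eventually_const_lt
      (by norm_num)
  obtain ⟨z, hzU, hz1, hz2, hz3, hz4⟩ := ((mem_closure_iff_frequently.mp hcl).and_eventually
    (ev1.and (ev2.and (ev3.and ev4)))).exists
  have hzn : ‖z‖ < 1 := by simpa using hUD hzU
  have hz0 : z ≠ 0 := by
    rintro rfl
    norm_num at hz4
  obtain ⟨μ, hμ⟩ := aux_greedy Λ M hM z hzn hz0 R
    (aux_step Λ M hM hM0 δ hδ hd R hR hR8 z hzn hz2.le hz3.le hz4.le)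
    ((w - P z) / z ^ N) (by rw [norm_div, norm_pow]; exact hz1.le)
  let l : ℕ → Λ := fun n => if n < N then l0 n else μ (n - N)
  refine ⟨l, fun n hn => by simp [l, hn], z, hzU, ?_⟩
  have hsum : Summable fun n => (l n : ℂ) * z ^ n := by
    refine Summable.of_norm_bounded (g := fun n => M * ‖z‖ ^ n)
      ((summable_geometric_of_lt_one (norm_nonneg _) hzn).mul_left M) ?_
    intro n
    rw [norm_mul, norm_pow]
    gcongr
    exact hM _ (l n).2
  rw [← hsum.sum_add_tsum_nat_add N]
  have e1 : ∑ n ∈ Finset.range N, (l n : ℂ) * z ^ n = P z := by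
    refine Finset.sum_congr rfl fun n hn => ?_
    simp [l, Finset.mem_range.mp hn]
  have e2 : ∀ n, (l (n + N) : ℂ) * z ^ (n + N) = z ^ N * ((μ n : ℂ) * z ^ n) := by
    intro n
    have : l (n + N) = μ n := by simp [l]
    rw [this]
    ring
  rw [e1]
  simp_rw [e2]
  rw [tsum_mul_left, hμ]
  field_simp
  ring



/-- If `Λ` is not contained in any real line (a one-dimensional real affine
subspace of `ℂ`), and `U ⊆ D` is open with `-1` in the closure of `U`, then for generic
`λ ∈ Ω` the image `f_λ(U)` is dense and open in `ℂ`. -/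
theorem stmt_1 (Λ : Set ℂ) (hΛbd : Bornology.IsBounded Λ) (hΛ2 : Λ.Nontrivial)
    [BaireSpace (ℕ → Λ)]
    (hline : ¬ ∃ p v : ℂ, v ≠ 0 ∧ ∀ x ∈ Λ, ∃ t : ℝ, x = p + (t : ℂ) * v)
    (U : Set ℂ) (hUopen : IsOpen U) (hUD : U ⊆ Metric.ball (0 : ℂ) 1)
    (hcl : (-1 : ℂ) ∈ closure U) :
    { lam : ℕ → Λ |
        Dense ((fun z : ℂ => ∑' n : ℕ, (lam n : ℂ) * z ^ n) '' U) ∧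
        IsOpen ((fun z : ℂ => ∑' n : ℕ, (lam n : ℂ) * z ^ n) '' U) } ∈
      residual (ℕ → Λ) := by
  classical
  obtain ⟨M, hM⟩ := hΛbd.exists_norm_le
  have hM0 : 0 ≤ M := by
    obtain ⟨x, hx⟩ := hΛ2.nonempty
    exact (norm_nonneg x).trans (hM x hx)
  obtain ⟨δ, hδ, hd⟩ := aux_delta Λ hΛ2 hline
  let F : (ℕ → Λ) → ℂ → ℂ := fun lam z => ∑' n : ℕ, (lam n : ℂ) * z ^ n
  have hball : ∀ z ∈ U, ‖z‖ < 1 := fun z hz => by simpa using hUD hz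
  have key : ∀ V ∈ TopologicalSpace.countableBasis ℂ,
      {lam : ℕ → Λ | (V ∩ F lam '' U).Nonempty} ∈ residual (ℕ → Λ) := by
    intro V hV
    have hVo := TopologicalSpace.isOpen_of_mem_countableBasis hV
    obtain ⟨w, hw⟩ := TopologicalSpace.nonempty_of_mem_countableBasis hV
    apply residual_of_dense_open
    · have e : {lam : ℕ → Λ | (V ∩ F lam '' U).Nonempty}
          = ⋃ z ∈ U, (fun lam => F lam z) ⁻¹' V := by
        ext lam
        simp only [Set.mem_ofPred_eq, Set.mem_iUnion, Set.mem_preimage]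
        constructor
        · rintro ⟨_, h, z, hz, rfl⟩
          exact ⟨z, hz, h⟩
        · rintro ⟨z, hz, h⟩
          exact ⟨_, h, z, hz, rfl⟩
      rw [e]
      refine isOpen_biUnion fun z hz => hVo.preimage ?_
      refine continuous_tsum (u := fun n => M * ‖z‖ ^ n) (fun n => by fun_prop)
        ((summable_geometric_of_lt_one (norm_nonneg _) (hball z hz)).mul_left M) ?_
      intro n lam
      rw [norm_mul, norm_pow]
      gcongr
      exact hM _ (lam n).2
    · intro l0
      choose L hL1 hL2 using aux_dense Λ M hM hM0 δ hδ hd U hUD hcl w l0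
      refine mem_closure_of_tendsto (f := L) (b := atTop) ?_ (Eventually.of_forall fun N => ?_)
      · rw [tendsto_pi_nhds]
        intro n
        refine tendsto_const_nhds.congr' ?_
        filter_upwards [eventually_gt_atTop n] with N hN
        exact (hL1 N n hN).symm
      · obtain ⟨z, hz, h⟩ := hL2 N
        exact ⟨w, hw, z, hz, h⟩
  have key2 := (countable_bInter_mem (TopologicalSpace.countable_countableBasis ℂ)).mpr key
  refine mem_of_superset key2 ?_
  intro lam hlam
  simp only [Set.mem_iInter, Set.mem_ofPred_eq] at hlam
  have hdense : Dense (F lam '' U) := by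
    rw [(TopologicalSpace.isBasis_countableBasis ℂ).dense_iff]
    intro V hV _
    exact hlam V hV
  refine ⟨hdense, ?_⟩
  have hdiff : DifferentiableOn ℂ (F lam) (Metric.ball 0 1) := by
    intro z hz
    obtain ⟨r, hr1, hr2⟩ := exists_between (show ‖z‖ < 1 by simpa using hz)
    have hr0 : 0 ≤ r := (norm_nonneg z).trans hr1.le
    have : DifferentiableOn ℂ (F lam) (Metric.ball 0 r) := by
      refine Complex.differentiableOn_tsum_of_summable_norm (u := fun n => M * r ^ n)
        ((summable_geometric_of_lt_one hr0 hr2).mul_left M) (fun n => by fun_prop)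
        Metric.isOpen_ball ?_
      intro n x hx
      rw [norm_mul, norm_pow]
      have hx : ‖x‖ < r := by simpa using hx
      gcongr
      exact hM _ (lam n).2
    exact ((this z (by simpa using hr1)).differentiableAt
      (Metric.isOpen_ball.mem_nhds (by simpa using hr1))).differentiableWithinAt
  have han : AnalyticOnNhd ℂ (F lam) (Metric.ball 0 1) :=
    hdiff.analyticOnNhd Metric.isOpen_ball
  rcases han.is_constant_or_isOpen (convex_ball (0 : ℂ) 1).isPreconnected with ⟨c, hc⟩ | h
  · exfalso
    have hsub : F lam '' U ⊆ {c} := by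
      rintro _ ⟨z, hz, rfl⟩
      exact hc z (hUD hz)
    have h1 : closure ({c} : Set ℂ) = Set.univ := (hdense.mono hsub).closure_eq
    rw [closure_singleton] at h1
    have : c + 1 ∈ ({c} : Set ℂ) := h1 ▸ Set.mem_univ _
    simp at this
  · exact h U hUD hUopen
end

section
/- Assume Λ is contained in a real line. Then there exists an open set U ⊆ D with −1 in the closure of U and a closed real half-plane H ⊆ ℂ such that for every λ ∈ Ω, the image f_λ(U) is disjoint from H. -/
lemma aux_im (z : ℂ) (n : ℕ) : |(z ^ n).im| * ‖z‖ ≤ |z.im| * (n * ‖z‖ ^ n) := by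
  induction n with
  | zero => simp
  | succ n ih =>
    have h1 : (z ^ (n+1)).im = (z^n).re * z.im + (z^n).im * z.re := by
      rw [pow_succ, Complex.mul_im]
    have h2 : |(z ^ (n+1)).im| ≤ ‖z‖^n * |z.im| + |(z^n).im| * ‖z‖ := by
      rw [h1]
      refine (abs_add_le _ _).trans ?_
      rw [abs_mul, abs_mul, ← norm_pow]
      gcongr
      · exact Complex.abs_re_le_norm _
      · exact Complex.abs_re_le_norm _
    calc _ ≤ (‖z‖^n * |z.im| + |(z^n).im| * ‖z‖) * ‖z‖ := by gcongr
      _ ≤ (‖z‖^n * |z.im| + |z.im| * (n * ‖z‖ ^ n)) * ‖z‖ := by gcongr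
      _ = _ := by push_cast; ring


/-- If `Λ` is contained in a real line, then there exists an open `U ⊆ D`
with `-1 ∈ closure U` and a closed real half-plane `H = {w : c ≤ Im (u * w)}` (with
`u ≠ 0`) such that for every `λ ∈ Ω` the image `f_λ(U)` is disjoint from `H`. -/
theorem stmt_2 (Λ : Set ℂ) (hΛbd : Bornology.IsBounded Λ) (hΛ2 : Λ.Nontrivial)
    (hline : ∃ p v : ℂ, v ≠ 0 ∧ ∀ x ∈ Λ, ∃ t : ℝ, x = p + (t : ℂ) * v) :
    ∃ U : Set ℂ, IsOpen U ∧ U ⊆ Metric.ball (0 : ℂ) 1 ∧ (-1 : ℂ) ∈ closure U ∧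
      ∃ u : ℂ, u ≠ 0 ∧ ∃ c : ℝ,
        ∀ lam : ℕ → ℂ, (∀ n, lam n ∈ Λ) →
          Disjoint ((fun z : ℂ => ∑' n : ℕ, lam n * z ^ n) '' U)
            {w : ℂ | c ≤ (u * w).im} := by

  obtain ⟨p, v, hv, hl⟩ := hline
  obtain ⟨M, hM⟩ := hΛbd.exists_norm_le
  have hv' : 0 < ‖v‖ := norm_pos_iff.2 hv
  set T : ℝ := (M + ‖p‖) / ‖v‖ with hT
  refine ⟨{z | |z.im| < (1 - ‖z‖) ^ 2 ∧ ‖z‖ < 1 ∧ z.re < 0}, ?_, ?_, ?_, v⁻¹, inv_ne_zero hv,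
    ‖v⁻¹ * p‖ + T + 1, ?_⟩
  · have a1 : IsOpen {z : ℂ | |z.im| < (1 - ‖z‖) ^ 2} :=
      isOpen_lt Complex.continuous_im.abs ((continuous_const.sub continuous_norm).pow 2)
    have a2 : IsOpen {z : ℂ | ‖z‖ < 1} := isOpen_lt continuous_norm continuous_const
    have a3 : IsOpen {z : ℂ | z.re < 0} := isOpen_lt Complex.continuous_re continuous_const
    exact a1.inter (a2.inter a3)
  · rintro z ⟨_, h, _⟩
    simpa using h
  · rw [Metric.mem_closure_iff]
    intro ε hε
    obtain ⟨d, hd0, hd⟩ := exists_between (lt_min hε one_pos)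
    have hd1 := hd.trans_le (min_le_left _ _)
    have hd2 := hd.trans_le (min_le_right _ _)
    have hn : ‖((-(1 - d) : ℝ) : ℂ)‖ = 1 - d := by
      rw [Complex.norm_real, norm_neg, Real.norm_of_nonneg (by linarith)]
    refine ⟨((-(1 - d) : ℝ) : ℂ), ⟨?_, ?_, ?_⟩, ?_⟩
    · rw [hn, Complex.ofReal_im, abs_zero]
      have : 0 < d ^ 2 := by positivity
      linarith [show (1 - (1 - d)) ^ 2 = d ^ 2 by ring]
    · rw [hn]; linarith
    · rw [Complex.ofReal_re]; linarith
    · rw [dist_eq_norm]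
      have : (-1 : ℂ) - ((-(1 - d) : ℝ) : ℂ) = ((-d : ℝ) : ℂ) := by push_cast; ring
      rw [this, Complex.norm_real, norm_neg, Real.norm_of_nonneg hd0.le]
      exact hd1
  · intro lam hlam
    rw [Set.disjoint_left]
    rintro _ ⟨z, ⟨hz1, hz2, hz3⟩, rfl⟩ hc
    simp only [Set.mem_ofPred_eq] at hc
    choose t ht using fun n => hl (lam n) (hlam n)
    have htb : ∀ n, |t n| ≤ T := by
      intro n
      rw [hT, le_div_iff₀ hv']
      have h1 : (t n : ℂ) * v = lam n - p := by rw [ht n]; ring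
      have h2 : |t n| * ‖v‖ = ‖lam n - p‖ := by rw [← h1, norm_mul, Complex.norm_real]; rfl
      rw [h2]
      exact (norm_sub_le _ _).trans (by linarith [hM _ (hlam n)])
    have hT0 : 0 ≤ T := (abs_nonneg _).trans (htb 0)
    have hz0 : 0 < ‖z‖ := norm_pos_iff.2 (by rintro rfl; simp at hz3)
    have hg := (hasSum_geometric_of_norm_lt_one hz2).mul_left (v⁻¹ * p)
    have hs : Summable (fun n => (t n : ℂ) * z ^ n) := by
      refine Summable.of_norm_bounded
        ((summable_geometric_of_lt_one (norm_nonneg z) hz2).mul_left T) fun n => ?_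
      rw [norm_mul, norm_pow, Complex.norm_real]
      exact mul_le_mul_of_nonneg_right (htb n) (by positivity)
    have hsum := hg.add hs.hasSum
    have e : v⁻¹ * ∑' n : ℕ, lam n * z ^ n
        = v⁻¹ * p * (1 - z)⁻¹ + ∑' n, (t n : ℂ) * z ^ n := by
      rw [← hsum.tsum_eq, ← tsum_mul_left]
      congr 1; ext n
      rw [ht n]; field_simp
    rw [e, Complex.add_im] at hc
    have b1 : (v⁻¹ * p * (1 - z)⁻¹).im ≤ ‖v⁻¹ * p‖ := by
      refine (Complex.im_le_norm _).trans ?_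
      rw [norm_mul]
      refine mul_le_of_le_one_right (norm_nonneg _) ?_
      rw [norm_inv]
      refine inv_le_one_of_one_le₀ ?_
      have := Complex.re_le_norm (1 - z)
      simp only [Complex.sub_re, Complex.one_re] at this
      linarith
    have b2 : (∑' n, (t n : ℂ) * z ^ n).im ≤ T := by
      have h1 := (Complex.hasSum_im hs.hasSum).mul_right ‖z‖
      have h2 := (hasSum_coe_mul_geometric_of_norm_lt_one
        (r := ‖z‖) (by simpa using hz2)).mul_left (T * |z.im|)
      have h3 := hasSum_le (fun n => ?_) h1 h2
      · have hp : 0 < (1 - ‖z‖) ^ 2 := pow_pos (by linarith) 2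
        have h4 : T * |z.im| * (‖z‖ / (1 - ‖z‖) ^ 2) ≤ T * ‖z‖ := by
          rw [mul_assoc]
          refine mul_le_mul_of_nonneg_left ?_ hT0
          rw [← mul_div_assoc, div_le_iff₀ hp, mul_comm ‖z‖]
          exact mul_le_mul_of_nonneg_right hz1.le hz0.le
        exact le_of_mul_le_mul_right (h3.trans h4) hz0
      · rw [Complex.im_ofReal_mul]
        calc t n * (z ^ n).im * ‖z‖ ≤ |t n * (z ^ n).im| * ‖z‖ := by
              gcongr; exact le_abs_self _
          _ = |t n| * (|(z ^ n).im| * ‖z‖) := by rw [abs_mul, mul_assoc]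
          _ ≤ T * (|z.im| * (n * ‖z‖ ^ n)) :=
              mul_le_mul (htb n) (aux_im z n) (by positivity) hT0
          _ = _ := by ring
    linarith
end

section
/- Let g : D → ℂ be defined by g(z) = ∑_{k=0}^∞ z^{2k+1} = z/(1 − z²) on the open unit disk D = {z ∈ ℂ : |z| < 1}. Then the image g(D) is dense in ℂ, while the image of D under the function z ↦ g(z) − (1/2)·1/(1 − z) = −1/(2(1 + z)) is not dense in ℂ. In particular, there exists a sequence λ = (λ_n)_{n≥0} with λ_n ∈ {0,1} such that f_λ(D) is dense in ℂ but f_{λ − 1/2}(D) is not dense in ℂ. -/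
theorem aux_dense_s16 :
    Dense ((fun z : ℂ => z / (1 - z ^ 2)) '' Metric.ball (0 : ℂ) 1) := by
  have hd : Dense {w : ℂ | w.re ≠ 0} :=
    (dense_compl_singleton (0 : ℝ)).preimage Complex.isOpenMap_re
  refine hd.mono ?_
  intro w hw
  have hw' : w.re ≠ 0 := hw
  have hw0 : w ≠ 0 := by
    rintro rfl
    simp at hw'
  obtain ⟨s, hs⟩ := IsAlgClosed.exists_pow_nat_eq (1 + 4 * w ^ 2) (n := 2) (by norm_num)
  have key : ∀ z : ℂ, ‖z‖ < 1 → w * (1 - z ^ 2) = z →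
      w ∈ (fun z : ℂ => z / (1 - z ^ 2)) '' Metric.ball (0 : ℂ) 1 := by
    intro z hz h
    refine ⟨z, by simpa using hz, ?_⟩
    have h1 : 1 - z ^ 2 ≠ 0 := by
      intro h0
      rw [h0, mul_zero] at h
      rw [← h] at h0
      norm_num at h0
    show z / (1 - z ^ 2) = w
    rw [div_eq_iff h1, h]
  obtain ⟨z, hz⟩ : ∃ z : ℂ, w * (1 - z ^ 2) = z := by
    refine ⟨(s - 1) / (2 * w), ?_⟩
    field_simp
    linear_combination -hs
  have hz0 : z ≠ 0 := by
    rintro rfl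
    simp [hw0] at hz
  rcases lt_trichotomy ‖z‖ 1 with h | h | h
  · exact key z h hz
  · exfalso
    have h1 : z * (starRingEnd ℂ) z = 1 := by
      rw [Complex.mul_conj, Complex.normSq_eq_norm_sq, h]; norm_num
    have h2 : w * ((starRingEnd ℂ) z - z) = 1 := by
      linear_combination (starRingEnd ℂ z) * hz + (1 + w * z) * h1
    have h3 := congrArg Complex.re h2
    have h4 := congrArg Complex.im h2
    simp at h3 h4
    have h6 : z.im = 0 := by
      rcases h4 with h4 | h4
      · exact absurd h4 hw'
      · linarith
    rw [h6] at h3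
    norm_num at h3
  · refine key (-z⁻¹) ?_ ?_
    · rw [norm_neg, norm_inv]
      exact inv_lt_one_of_one_lt₀ h
    · field_simp
      linear_combination -hz

theorem aux_not_dense :
    ¬ Dense ((fun z : ℂ => -1 / (2 * (1 + z))) '' Metric.ball (0 : ℂ) 1) := by
  intro hd
  have hsub : ((fun z : ℂ => -1 / (2 * (1 + z))) '' Metric.ball (0 : ℂ) 1) ⊆
      {w : ℂ | w.re ≤ 0} := by
    rintro _ ⟨z, hz, rfl⟩
    have hz1 : ‖z‖ < 1 := by simpa using hz
    have h1 : -1 < z.re := by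
      have := (abs_le.mp (Complex.abs_re_le_norm z)).1
      linarith
    show (-1 / (2 * (1 + z))).re ≤ 0
    rw [neg_div, one_div, Complex.neg_re, Complex.inv_re]
    have h2 : 0 ≤ (2 * (1 + z)).re := by
      simp
      linarith
    have := div_nonneg h2 (Complex.normSq_nonneg (2 * (1 + z)))
    linarith
  have hc : IsClosed {w : ℂ | w.re ≤ 0} := isClosed_le Complex.continuous_re continuous_const
  have h1 : (1 : ℂ) ∈ {w : ℂ | w.re ≤ 0} := closure_minimal hsub hc (hd 1)
  have h2 : (1 : ℂ).re ≤ 0 := h1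
  norm_num at h2

/-- The image of the unit disk under `g(z) = z/(1 - z²)` is dense in `ℂ`,
while the image of the disk under `z ↦ -1/(2(1+z))` is not dense; in particular there is a
`{0,1}`-valued coefficient sequence `λ` (namely `λ_n = 1` for odd `n`, `0` for even `n`)
with `f_λ(D)` dense in `ℂ` but `f_{λ - 1/2}(D)` not dense in `ℂ`. -/
theorem stmt_16 :
    Dense ((fun z : ℂ => z / (1 - z ^ 2)) '' Metric.ball (0 : ℂ) 1) ∧
    ¬ Dense ((fun z : ℂ => -1 / (2 * (1 + z))) '' Metric.ball (0 : ℂ) 1) ∧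
    ∃ lam : ℕ → ℂ, (∀ n, lam n ∈ ({0, 1} : Set ℂ)) ∧
      Dense ((fun z : ℂ => ∑' n : ℕ, lam n * z ^ n) '' Metric.ball (0 : ℂ) 1) ∧
      ¬ Dense ((fun z : ℂ => ∑' n : ℕ, (lam n - 1 / 2) * z ^ n) ''
          Metric.ball (0 : ℂ) 1) := by
  refine ⟨aux_dense_s16, aux_not_dense, fun n => (1 - (-1) ^ n) / 2, ?_, ?_, ?_⟩
  · intro n
    rcases Nat.even_or_odd n with h | h
    · left; simp [h.neg_one_pow]
    · right; norm_num [h.neg_one_pow]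
  · convert aux_dense_s16 using 1
    refine Set.image_congr fun z hz => ?_
    have hz1 : ‖z‖ < 1 := by simpa using hz
    have ha := hasSum_geometric_of_norm_lt_one hz1
    have hb := hasSum_geometric_of_norm_lt_one (ξ := -z) (by simpa using hz1)
    have hc := (ha.sub hb).div_const 2
    have e : (fun n : ℕ => (1 - (-1 : ℂ) ^ n) / 2 * z ^ n) =
        fun n : ℕ => (z ^ n - (-z) ^ n) / 2 := by
      funext n
      rw [neg_pow z n]; ring
    show (∑' n : ℕ, (1 - (-1 : ℂ) ^ n) / 2 * z ^ n) = _
    rw [e, hc.tsum_eq]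
    have h1 : 1 - z ≠ 0 := by
      intro h
      rw [← sub_eq_zero.mp h] at hz1
      norm_num at hz1
    have h2 : 1 + z ≠ 0 := by
      intro h
      rw [eq_neg_of_add_eq_zero_right h] at hz1
      norm_num at hz1
    have h3 : 1 - z ^ 2 = (1 - z) * (1 + z) := by ring
    rw [h3, sub_neg_eq_add]
    field_simp
    ring
  · convert aux_not_dense using 2
    refine Set.image_congr fun z hz => ?_
    have hz1 : ‖z‖ < 1 := by simpa using hz
    have hb := hasSum_geometric_of_norm_lt_one (ξ := -z) (by simpa using hz1)
    have hc := hb.mul_left (-1 / 2)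
    have e : (fun n : ℕ => ((1 - (-1 : ℂ) ^ n) / 2 - 1 / 2) * z ^ n) =
        fun n : ℕ => (-1 / 2) * (-z) ^ n := by
      funext n
      rw [neg_pow z n]; ring
    show (∑' n : ℕ, ((1 - (-1 : ℂ) ^ n) / 2 - 1 / 2) * z ^ n) = _
    rw [e, hc.tsum_eq, sub_neg_eq_add, ← div_eq_mul_inv, div_div]
end
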